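/- Let n ≥ 1 and f ∈ LCₙ. Then the functional affine surface area and the functional geominimal surface area satisfy Ω♯(f)^{n+1} ≤ n·ωₙ·G♯(f)^n. -/

import Mathlib

open MeasureTheory Filter Set Metric
open scoped Topology NNReal ENNReal Pointwise RealInnerProductSpace

noncomputable section

abbrev Euc (n : ℕ) := EuclideanSpace ℝ (Fin n)

/-- `f` is log-concave: `f((1-λ)x + λy) ≥ f(x)^{1-λ} f(y)^λ`. -/
def IsLogConcaveFn {n : ℕ} (f : Euc n → ℝ) : Prop :=
  ∀ x y : Euc n, ∀ a b : ℝ, 0 ≤ a → 0 ≤ b → a + b = 1 →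
    (f x) ^ a * (f y) ^ b ≤ f (a • x + b • y)

/-- The class `LCₙ`. -/
structure MemLC {n : ℕ} (f : Euc n → ℝ) : Prop where
  nonneg : ∀ x, 0 ≤ f x
  usc : UpperSemicontinuous f
  logConcave : IsLogConcaveFn f
  nonzero : ∃ x, 0 < f x
  tendsto_zero : Tendsto f (cocompact (Euc n)) (𝓝 0)
  support_interior : (interior {x | 0 < f x}).Nonempty

/-- `(f ⋆ (t·1_C))(x) = sup_{z ∈ tC} f(x − z)`. -/
def indSup {n : ℕ} (f : Euc n → ℝ) (C : Set (Euc n)) (t : ℝ) (x : Euc n) : ℝ :=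
  ⨆ z ∈ t • C, f (x - z)

/-- The first variation `δ(f, 1_C)` exists and equals `a`. -/
def HasVarInd {n : ℕ} (f : Euc n → ℝ) (C : Set (Euc n)) (a : ℝ) : Prop :=
  Tendsto (fun t : ℝ => ((∫ x, indSup f C t x) - ∫ x, f x) / t)
    (𝓝[>] (0 : ℝ)) (𝓝 a)

/-- The radial function `ρ_Q(u) = max {r ≥ 0 : r u ∈ Q}`. -/
def radialFn {n : ℕ} (Q : Set (Euc n)) (u : Euc n) : ℝ :=
  sSup {r : ℝ | 0 ≤ r ∧ r • u ∈ Q}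

/-- A centered star body: compact, `0` in the interior, star-shaped about the origin,
continuous radial function on the sphere, centroid at the origin. -/
structure IsCenteredStarBody {n : ℕ} (Q : Set (Euc n)) : Prop where
  compact : IsCompact Q
  zero_mem_interior : (0 : Euc n) ∈ interior Q
  starShaped : ∀ x ∈ Q, ∀ r : ℝ, 0 ≤ r → r ≤ 1 → r • x ∈ Q
  radial_continuous : ContinuousOn (radialFn Q) (sphere (0 : Euc n) 1)
  centroid_zero : (∫ x in Q, x) = (0 : Euc n)

/-- The polar set `Q° = {y : ⟪x,y⟫ ≤ 1 for all x ∈ Q}`. -/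
def polarSet {n : ℕ} (Q : Set (Euc n)) : Set (Euc n) :=
  {y : Euc n | ∀ x ∈ Q, ⟪x, y⟫ ≤ 1}

/-- The set `A_f = {a · vol(Q)^{1/n} : Q a centered star body with δ(f, 1_{Q°}) = a}`. -/
def asaSet (n : ℕ) (f : Euc n → ℝ) : Set ℝ :=
  {y : ℝ | ∃ (Q : Set (Euc n)) (a : ℝ), IsCenteredStarBody Q ∧
    HasVarInd f (polarSet Q) a ∧ y = a * (volume Q).toReal ^ ((1 : ℝ) / n)}

/-- The functional affine surface area `Ω♯(f) = n^{1/(n+1)} (inf A_f)^{n/(n+1)}`. -/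
def affSA (n : ℕ) (f : Euc n → ℝ) : ℝ :=
  (n : ℝ) ^ ((1 : ℝ) / ((n : ℝ) + 1)) * (sInf (asaSet n f)) ^ ((n : ℝ) / ((n : ℝ) + 1))

/-- The set of values `a · (vol(Q)/ωₙ)^{1/n}` over convex bodies `Q` with centroid at the
origin such that `δ(f, 1_{Q°}) = a`. -/
def gsaSet (n : ℕ) (f : Euc n → ℝ) : Set ℝ :=
  {y : ℝ | ∃ (Q : Set (Euc n)) (a : ℝ), IsCompact Q ∧ Convex ℝ Q ∧
    (interior Q).Nonempty ∧ (∫ x in Q, x) = (0 : Euc n) ∧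
    HasVarInd f (polarSet Q) a ∧
    y = a * ((volume Q).toReal / (volume (closedBall (0 : Euc n) 1)).toReal)
      ^ ((1 : ℝ) / n)}

/-- The functional geominimal surface area `G♯(f)`. -/
def geomSA (n : ℕ) (f : Euc n → ℝ) : ℝ := sInf (gsaSet n f)


lemma zero_mem_interior_of_centroid {n : ℕ} {Q : Set (Euc n)} (hQ : IsCompact Q)
    (hc : Convex ℝ Q) (hi : (interior Q).Nonempty) (h0 : (∫ x in Q, x) = (0 : Euc n)) :
    (0 : Euc n) ∈ interior Q := by
  by_contra hnot
  obtain ⟨l, hl⟩ := geometric_hahn_banach_open_point hc.interior isOpen_interior hnot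
  rw [map_zero] at hl
  have hle : ∀ x ∈ Q, l x ≤ 0 := by
    have h1 : Q ⊆ closure (interior Q) := by
      rw [hc.closure_interior_eq_closure_of_nonempty_interior hi]
      exact subset_closure
    have h2 : closure (interior Q) ⊆ {x | l x ≤ 0} :=
      closure_minimal (fun x hx => (hl x hx).le) (isClosed_le l.continuous continuous_const)
    exact fun x hx => h2 (h1 hx)
  have hint : IntegrableOn (fun x : Euc n => x) Q := continuous_id.continuousOn.integrableOn_compact hQ
  have hz : ∫ x in Q, l x = 0 := by
    rw [l.integral_comp_comm hint, h0, map_zero]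
  have hintl : IntegrableOn (fun x : Euc n => - l x) Q := (l.integrable_comp hint).neg
  have hpos : 0 < ∫ x in Q, - l x := by
    rw [setIntegral_pos_iff_support_of_nonneg_ae _ hintl]
    · refine lt_of_lt_of_le (isOpen_interior.measure_pos volume hi) (measure_mono ?_)
      intro x hx
      refine ⟨?_, interior_subset hx⟩
      simpa using (hl x hx).ne
    · exact (ae_restrict_iff' hQ.measurableSet).2 (ae_of_all _ fun x hx => by
        simpa using hle x hx)
  rw [integral_neg, hz] at hpos
  simp at hpos

lemma convex_isStar {n : ℕ} {Q : Set (Euc n)} (hQ : IsCompact Q)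
    (hc : Convex ℝ Q) (hi : (interior Q).Nonempty) (h0 : (∫ x in Q, x) = (0 : Euc n)) :
    IsCenteredStarBody Q := by
  have hz := zero_mem_interior_of_centroid hQ hc hi h0
  have hn : Q ∈ 𝓝 (0 : Euc n) := mem_interior_iff_mem_nhds.1 hz
  refine ⟨hQ, hz, ?_, ?_, h0⟩
  · intro x hx r hr hr1
    exact hc.smul_mem_of_zero_mem (interior_subset hz) hx ⟨hr, hr1⟩
  · have hpos : ∀ u ∈ sphere (0 : Euc n) 1, 0 < gauge Q u := by
      intro u hu
      rw [gauge_pos (absorbent_nhds_zero hn) (NormedSpace.isVonNBounded_of_isBounded _ hQ.isBounded)]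
      rintro rfl
      simp at hu
    have heq : ∀ u ∈ sphere (0 : Euc n) 1, radialFn Q u = (gauge Q u)⁻¹ := by
      intro u hu
      have hp := hpos u hu
      have : {r : ℝ | 0 ≤ r ∧ r • u ∈ Q} = Icc 0 (gauge Q u)⁻¹ := by
        ext r
        simp only [mem_ofPred_eq, mem_Icc]
        refine and_congr_right fun hr => ?_
        rw [← hQ.isClosed.closure_eq, ← gauge_le_one_iff_mem_closure hc hn, 
          gauge_smul_of_nonneg hr, smul_eq_mul, hQ.isClosed.closure_eq, ← one_div, le_div_iff₀ hp]
      rw [radialFn, this, csSup_Icc (inv_nonneg.2 hp.le)]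
    refine ContinuousOn.congr ?_ heq
    exact (continuous_gauge hc hn).continuousOn.inv₀ fun u hu => (hpos u hu).ne'

lemma MemLC.bdd {n : ℕ} {f : Euc n → ℝ} (hf : MemLC f) : ∃ M, 0 < M ∧ ∀ x, f x ≤ M := by
  have h := hf.tendsto_zero.eventually (gt_mem_nhds (zero_lt_one (α := ℝ)))
  obtain ⟨K, hK, hsub⟩ := mem_cocompact.1 h
  rcases K.eq_empty_or_nonempty with he | he
  · refine ⟨1, one_pos, fun x => (hsub (by simp [he]) : f x < 1).le⟩
  obtain ⟨a, _, ha⟩ := UpperSemicontinuousOn.exists_isMaxOn he hK (hf.usc.upperSemicontinuousOn K)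
  refine ⟨max 1 (f a), lt_max_of_lt_left one_pos, fun x => ?_⟩
  by_cases hx : x ∈ K
  · exact (ha hx).trans (le_max_right _ _)
  · exact (hsub hx : f x < 1).le.trans (le_max_left _ _)

lemma inner_iSup_le {n : ℕ} {f : Euc n → ℝ} {C : Set (Euc n)} {t : ℝ} {x z : Euc n} {c : ℝ}
    (hc : 0 ≤ c) (h : z ∈ t • C → f (x - z) ≤ c) : ⨆ (_ : z ∈ t • C), f (x - z) ≤ c :=
  Real.iSup_le h hc

lemma indSup_le {n : ℕ} {f : Euc n → ℝ} {C : Set (Euc n)} {t : ℝ} {x : Euc n} {c : ℝ}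
    (hc : 0 ≤ c) (h : ∀ z ∈ t • C, f (x - z) ≤ c) : indSup f C t x ≤ c :=
  Real.iSup_le (fun z => inner_iSup_le hc (h z)) hc

lemma le_indSup {n : ℕ} {f : Euc n → ℝ} (hf : MemLC f) {C : Set (Euc n)} {t : ℝ} {x z : Euc n}
    (hz : z ∈ t • C) : f (x - z) ≤ indSup f C t x := by
  obtain ⟨M, hM0, hM⟩ := hf.bdd
  have hb : BddAbove (range fun z => ⨆ (_ : z ∈ t • C), f (x - z)) := by
    refine ⟨M, ?_⟩
    rintro _ ⟨w, rfl⟩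
    exact inner_iSup_le hM0.le fun _ => hM _
  have := le_ciSup hb z
  simp only [hz, ciSup_pos] at this
  exact this

lemma indSup_nonneg {n : ℕ} {f : Euc n → ℝ} (hf : MemLC f) (C : Set (Euc n)) (t : ℝ) (x : Euc n) :
    0 ≤ indSup f C t x :=
  Real.iSup_nonneg fun z => Real.iSup_nonneg fun _ => hf.nonneg _

lemma hasVar_nonneg {n : ℕ} {f : Euc n → ℝ} (hf : MemLC f) {C : Set (Euc n)} (h0 : (0 : Euc n) ∈ C)
    {a : ℝ} (h : HasVarInd f C a) : 0 ≤ a := by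
  by_contra hneg
  push Not at hneg
  have hle : ∀ t x, f x ≤ indSup f C t x := by
    intro t x
    have : (0 : Euc n) ∈ t • C := ⟨0, h0, smul_zero t⟩
    simpa using le_indSup hf (x := x) this
  have hJ0 : 0 ≤ ∫ x, f x := integral_nonneg hf.nonneg
  have e1 := h.eventually (gt_mem_nhds hneg)
  have e2 := h.eventually (lt_mem_nhds (sub_one_lt a))
  have e3 : ∀ᶠ t : ℝ in 𝓝[>] 0, (1 - a) * t < ∫ x, f x ∨ (∫ x, f x) = 0 := by
    rcases hJ0.eq_or_lt with hh | hh
    · exact Eventually.of_forall fun t => Or.inr hh.symm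
    · have : Tendsto (fun t : ℝ => (1 - a) * t) (𝓝[>] 0) (𝓝 0) := by
        have : Tendsto (fun t : ℝ => (1 - a) * t) (𝓝 0) (𝓝 ((1 - a) * 0)) :=
          tendsto_const_nhds.mul tendsto_id
        rw [mul_zero] at this
        exact this.mono_left nhdsWithin_le_nhds
      exact (this.eventually (gt_mem_nhds hh)).mono fun t ht => Or.inl ht
  obtain ⟨t, ⟨⟨h1, h2⟩, h3⟩, ht⟩ := (((e1.and e2).and e3).and self_mem_nhdsWithin).exists
  have ht : 0 < t := ht
  rw [div_lt_iff₀ ht, zero_mul] at h1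
  rw [lt_div_iff₀ ht] at h2
  have hI0 : 0 ≤ ∫ x, indSup f C t x := integral_nonneg (indSup_nonneg hf C t)
  rcases h3 with h3 | h3
  · have : (∫ x, indSup f C t x) ≠ 0 := by
      intro h; rw [h] at h2; nlinarith
    have hint : Integrable (indSup f C t) := by
      by_contra hni
      exact this (integral_undef hni)
    have := integral_mono_of_nonneg (ae_of_all _ hf.nonneg) hint (ae_of_all _ (hle t))
    linarith
  · linarith

lemma final_algebra {n : ℕ} (hn : 1 ≤ n) (f : Euc n → ℝ) (hf : MemLC f) 
    (hne : (gsaSet n f).Nonempty) :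
    affSA n f ^ (n + 1)
      ≤ (n : ℝ) * (volume (closedBall (0 : Euc n) 1)).toReal * geomSA n f ^ n := by
  set ω := (volume (closedBall (0 : Euc n) 1)).toReal with hω
  have hωpos : 0 < ω := by
    refine ENNReal.toReal_pos (measure_closedBall_pos _ _ one_pos).ne' 
      (isCompact_closedBall _ _).measure_ne_top
  have hA0 : ∀ y ∈ asaSet n f, 0 ≤ y := by
    rintro y ⟨Q, a, hQ, ha, rfl⟩
    refine mul_nonneg (hasVar_nonneg hf ?_ ha) (by positivity)
    intro x _; simp
  have hA : 0 ≤ sInf (asaSet n f) := Real.sInf_nonneg hA0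
  have hn0 : (n : ℝ) ≠ 0 := by positivity
  have hv : 0 < ω ^ ((1 : ℝ) / n) := by positivity
  have hG : sInf (asaSet n f) / ω ^ ((1 : ℝ) / n) ≤ geomSA n f := by
    refine le_csInf hne ?_
    rintro y ⟨Q, a, hQ, hc, hi, h0, ha, rfl⟩
    rw [div_le_iff₀ hv]
    refine csInf_le ⟨0, hA0⟩ ⟨Q, a, convex_isStar hQ hc hi h0, ha, ?_⟩
    rw [mul_assoc, Real.div_rpow (by positivity) hωpos.le, div_mul_cancel₀ _ hv.ne']
  rw [affSA, mul_pow, ← Real.rpow_natCast, ← Real.rpow_natCast, ← Real.rpow_mul (by positivity),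
    ← Real.rpow_mul hA]
  have h1 : (1 : ℝ) / ((n : ℝ) + 1) * ((n + 1 : ℕ) : ℝ) = 1 := by
    push_cast; field_simp
  have h2 : (n : ℝ) / ((n : ℝ) + 1) * ((n + 1 : ℕ) : ℝ) = n := by
    push_cast; field_simp
  rw [h1, h2, Real.rpow_one, Real.rpow_natCast, mul_assoc]
  refine mul_le_mul_of_nonneg_left ?_ (by positivity)
  have h3 := pow_le_pow_left₀ (by positivity) hG n
  rw [div_pow, ← Real.rpow_natCast (ω ^ ((1 : ℝ) / n)), ← Real.rpow_mul hωpos.le,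
    one_div_mul_cancel hn0, Real.rpow_one, div_le_iff₀ hωpos] at h3
  linarith

def fatR (I : Set ℝ) (s : ℝ) : Set ℝ := {u | ∃ v ∈ I, |u - v| ≤ s}

lemma fatR_Icc {a b s : ℝ} (hab : a ≤ b) (hs : 0 ≤ s) : fatR (Icc a b) s = Icc (a - s) (b + s) := by
  ext u
  simp only [fatR, mem_ofPred_eq, mem_Icc]
  constructor
  · rintro ⟨v, ⟨h1, h2⟩, h3⟩
    rw [abs_le] at h3
    constructor <;> linarith [h3.1, h3.2]
  · rintro ⟨h1, h2⟩
    refine ⟨max a (min u b), ⟨le_max_left _ _, max_le hab (min_le_right _ _)⟩, ?_⟩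
    rw [abs_le]
    rcases le_total u b with h | h
    · rcases le_total a u with h' | h'
      · simp [h, h', hs]
      · simp [h, h']; constructor <;> linarith
    · simp [h, hab]; constructor <;> linarith

lemma oneD {I J : Set ℝ} (hI : IsCompact I) (hIc : Convex ℝ I) (hJ : IsCompact J)
    (hJc : Convex ℝ J) (hIJ : I ⊆ J) {s t : ℝ} (hs : 0 ≤ s) (ht : 0 ≤ t) :
    ENNReal.ofReal t * volume (fatR I s) + ENNReal.ofReal s * volume J ≤
      ENNReal.ofReal s * volume (fatR J t) + ENNReal.ofReal t * volume I := by
  have hsub : J ⊆ fatR J t := fun u hu => ⟨u, hu, by simpa using ht⟩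
  rcases I.eq_empty_or_nonempty with h | h
  · subst h
    have : fatR ∅ s = ∅ := by ext; simp [fatR]
    simp only [this, measure_empty, mul_zero, zero_add, add_zero]
    gcongr
  · have e1 := eq_Icc_of_connected_compact ⟨h, hIc.isPreconnected⟩ hI
    have e2 := eq_Icc_of_connected_compact ⟨h.mono hIJ, hJc.isPreconnected⟩ hJ
    generalize sInf I = a at e1
    generalize sSup I = b at e1
    generalize sInf J = c at e2
    generalize sSup J = d at e2
    have hab : a ≤ b := by rw [e1] at h; exact nonempty_Icc.1 h
    have hcd : c ≤ d := by have := h.mono hIJ; rw [e2] at this; exact nonempty_Icc.1 this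
    subst e1 e2
    rw [fatR_Icc hab hs, fatR_Icc hcd ht]
    simp only [Real.volume_Icc]
    rw [← ENNReal.ofReal_mul ht, ← ENNReal.ofReal_mul hs, ← ENNReal.ofReal_mul ht,
      ← ENNReal.ofReal_mul hs, ← ENNReal.ofReal_add, ← ENNReal.ofReal_add]
    · apply ENNReal.ofReal_le_ofReal
      nlinarith
    all_goals apply mul_nonneg <;> linarith

lemma stepD {n : ℕ} (i : Fin n) {A B A' B' : Set (Fin n → ℝ)} (hA : IsCompact A)
    (hAc : Convex ℝ A) (hB : IsCompact B) (hBc : Convex ℝ B) (hAB : A ⊆ B)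
    (hA'm : MeasurableSet A') (hB'm : MeasurableSet B') {s t : ℝ}
    (hs : 0 ≤ s) (ht : 0 ≤ t)
    (hA' : ∀ x u, Function.update x i u ∈ A' ↔ ∃ v, Function.update x i v ∈ A ∧ |u - v| ≤ s)
    (hB' : ∀ x u, Function.update x i u ∈ B' ↔ ∃ v, Function.update x i v ∈ B ∧ |u - v| ≤ t) :
    ENNReal.ofReal t * volume A' + ENNReal.ofReal s * volume B ≤
      ENNReal.ofReal s * volume B' + ENNReal.ofReal t * volume A := by
  have hcont : ∀ x : Fin n → ℝ, Continuous (fun u : ℝ => Function.update x i u) := fun x =>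
    continuous_const.update i continuous_id
  have fibC : ∀ (K : Set (Fin n → ℝ)), IsCompact K → ∀ x, IsCompact {u : ℝ | Function.update x i u ∈ K} := by
    intro K hK x
    have : IsClosed {u : ℝ | Function.update x i u ∈ K} := hK.isClosed.preimage (hcont x)
    refine IsCompact.of_isClosed_subset (hK.image (continuous_apply i)) this ?_
    intro u hu
    exact ⟨_, hu, by simp⟩
  have fibV : ∀ (K : Set (Fin n → ℝ)), Convex ℝ K → ∀ x, Convex ℝ {u : ℝ | Function.update x i u ∈ K} := by
    intro K hK x u hu v hv a b ha hb hab
    have := hK hu hv ha hb hab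
    simp only [mem_ofPred_eq]
    convert this using 1
    ext j
    by_cases hj : j = i
    · subst hj; simp
    · simp [hj, ← add_mul, hab]
  have key : ∀ (K L : Set (Fin n → ℝ)), MeasurableSet K → MeasurableSet L → ∀ p q : ℝ≥0∞,
      p * volume K + q * volume L = ∫⁻ x, (p * K.indicator 1 x + q * L.indicator 1 x) := by
    intro K L hK hL p q
    rw [lintegral_add_left ((measurable_one.indicator hK).const_mul p),
      lintegral_const_mul _ (measurable_one.indicator hK),
      lintegral_const_mul _ (measurable_one.indicator hL), lintegral_indicator_one hK,
      lintegral_indicator_one hL]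
  have key1 : ∀ (K L : Set (Fin n → ℝ)), MeasurableSet K → MeasurableSet L → ∀ (p q : ℝ≥0∞) (x : Fin n → ℝ),
      ∫⁻ u : ℝ, (p * K.indicator 1 (Function.update x i u) + q * L.indicator 1 (Function.update x i u)) = 
      p * volume {u : ℝ | Function.update x i u ∈ K} + q * volume {u : ℝ | Function.update x i u ∈ L} := by
    intro K L hK hL p q x
    have hK' : MeasurableSet {u : ℝ | Function.update x i u ∈ K} := (hcont x).measurable hK
    have hL' : MeasurableSet {u : ℝ | Function.update x i u ∈ L} := (hcont x).measurable hL
    rw [← lintegral_indicator_one hK', ← lintegral_indicator_one hL', 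
      ← lintegral_const_mul _ (measurable_one.indicator hK'),
      ← lintegral_const_mul _ (measurable_one.indicator hL'),
      ← lintegral_add_left ((measurable_one.indicator hK').const_mul p)]
    rfl
  rw [key _ _ hA'm hB.measurableSet, key _ _ hB'm hA.measurableSet]
  refine lintegral_le_of_lmarginal_le {i} ?_ ?_ ?_
  · exact ((measurable_one.indicator hA'm).const_mul _).add 
      ((measurable_one.indicator hB.measurableSet).const_mul _)
  · exact ((measurable_one.indicator hB'm).const_mul _).add 
      ((measurable_one.indicator hA.measurableSet).const_mul _)
  intro x
  rw [lmarginal_singleton, lmarginal_singleton]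
  beta_reduce
  rw [key1 _ _ hA'm hB.measurableSet, key1 _ _ hB'm hA.measurableSet]
  have e1 : {u : ℝ | Function.update x i u ∈ A'} = fatR {u : ℝ | Function.update x i u ∈ A} s := by
    ext u; exact hA' x u
  have e2 : {u : ℝ | Function.update x i u ∈ B'} = fatR {u : ℝ | Function.update x i u ∈ B} t := by
    ext u; exact hB' x u
  rw [e1, e2]
  exact oneD (fibC A hA x) (fibV A hAc x) (fibC B hB x) (fibV B hBc x) (fun u hu => hAB hu) hs ht

def boxS {n : ℕ} (S : Finset (Fin n)) (t : ℝ) : Set (Fin n → ℝ) :=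
  {z | ∀ j, |z j| ≤ if j ∈ S then t else 0}

lemma boxS_compact {n : ℕ} (S : Finset (Fin n)) (t : ℝ) : IsCompact (boxS S t) := by
  have : boxS S t = Set.pi univ (fun j => Icc (-(if j ∈ S then t else 0)) (if j ∈ S then t else 0)) := by
    ext z; simp only [boxS, mem_ofPred_eq, Set.mem_pi, mem_univ, true_imp_iff, mem_Icc, abs_le]
  rw [this]
  exact isCompact_univ_pi fun j => isCompact_Icc

lemma boxS_convex {n : ℕ} (S : Finset (Fin n)) (t : ℝ) : Convex ℝ (boxS S t) := by
  have : boxS S t = Set.pi univ (fun j => Icc (-(if j ∈ S then t else 0)) (if j ∈ S then t else 0)) := by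
    ext z; simp only [boxS, mem_ofPred_eq, Set.mem_pi, mem_univ, true_imp_iff, mem_Icc, abs_le]
  rw [this]
  exact convex_pi fun j _ => convex_Icc _ _

lemma boxS_mono {n : ℕ} (S : Finset (Fin n)) {s t : ℝ} (h : s ≤ t) : boxS S s ⊆ boxS S t := by
  intro z hz j
  refine (hz j).trans ?_
  split_ifs
  · exact h
  · exact le_rfl

lemma boxS_insert {n : ℕ} (K : Set (Fin n → ℝ)) {S : Finset (Fin n)} {i : Fin n} (hi : i ∉ S) 
    {t : ℝ} (ht : 0 ≤ t)
    (x : Fin n → ℝ) (u : ℝ) : Function.update x i u ∈ K + boxS (insert i S) t ↔ 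
      ∃ v, Function.update x i v ∈ K + boxS S t ∧ |u - v| ≤ t := by
  constructor
  · rintro ⟨k, hk, z, hz, h⟩
    have hzi := hz i
    simp only [Finset.mem_insert_self, if_true] at hzi
    refine ⟨u - z i, ⟨k, hk, Function.update z i 0, ?_, ?_⟩, by simpa using hzi⟩
    · intro j
      by_cases hj : j = i
      · subst hj; simp [hi]
      · have := hz j
        simp only [Finset.mem_insert, hj, false_or] at this
        simpa [hj] using this
    · ext j
      have := congrFun h j
      by_cases hj : j = i
      · subst hj; simp at this ⊢; linarith
      · simpa [hj] using this
  · rintro ⟨v, ⟨k, hk, z, hz, h⟩, hv⟩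
    have hzi := hz i
    simp only [hi, if_false] at hzi
    have hzi0 : z i = 0 := abs_nonpos_iff.1 hzi
    refine ⟨k, hk, Function.update z i (u - v), ?_, ?_⟩
    · intro j
      by_cases hj : j = i
      · subst hj; simpa using hv
      · have := hz j
        simpa [hj] using this
    · ext j
      have := congrFun h j
      by_cases hj : j = i
      · subst hj; simp [hzi0] at this ⊢; linarith
      · simpa [hj] using this

lemma boxIneq {n : ℕ} {K : Set (Fin n → ℝ)} (hK : IsCompact K) (hKc : Convex ℝ K)
    {s t : ℝ} (hs : 0 ≤ s) (hst : s ≤ t) (S : Finset (Fin n)) :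
    ENNReal.ofReal t * volume (K + boxS S s) + ENNReal.ofReal s * volume K ≤
      ENNReal.ofReal s * volume (K + boxS S t) + ENNReal.ofReal t * volume K := by
  have ht := hs.trans hst
  induction S using Finset.induction_on with
  | empty =>
    have : ∀ r : ℝ, boxS (∅ : Finset (Fin n)) r = 0 := by
      intro r; ext z
      simp only [boxS, Finset.notMem_empty, if_false, abs_nonpos_iff, mem_ofPred_eq, Set.mem_zero]
      exact ⟨fun h => funext h, fun h j => by simp [h]⟩
    rw [this, this, add_zero, add_comm]
  | insert i S hi ih =>
    have st := stepD i (A := K + boxS S s) (B := K + boxS S t) (A' := K + boxS (insert i S) s)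
      (B' := K + boxS (insert i S) t) (hK.add (boxS_compact _ _)) (hKc.add (boxS_convex _ _))
      (hK.add (boxS_compact _ _)) (hKc.add (boxS_convex _ _)) 
      (Set.add_subset_add_left (boxS_mono S hst)) (hK.add (boxS_compact _ _)).measurableSet
      (hK.add (boxS_compact _ _)).measurableSet hs ht (boxS_insert K hi hs) (boxS_insert K hi ht)
    have f1 : ENNReal.ofReal t * volume (K + boxS S s) ≠ ∞ := 
      ENNReal.mul_ne_top ENNReal.ofReal_ne_top (hK.add (boxS_compact _ _)).measure_ne_top
    have f2 : ENNReal.ofReal s * volume (K + boxS S t) ≠ ∞ := 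
      ENNReal.mul_ne_top ENNReal.ofReal_ne_top (hK.add (boxS_compact _ _)).measure_ne_top
    have := add_le_add st ih
    generalize ENNReal.ofReal t * volume (K + boxS S s) = a at *
    generalize ENNReal.ofReal s * volume (K + boxS S t) = b at *
    refine (ENNReal.add_le_add_iff_left (ENNReal.add_ne_top.2 ⟨f1, f2⟩)).1 ?_
    refine le_trans (le_of_eq ?_) (this.trans (le_of_eq ?_)) <;> ring

def cubeE (n : ℕ) : Set (Euc n) := {y | ∀ i, |y i| ≤ 1}

def crossE (n : ℕ) : Set (Euc n) := {x | ∑ i, |x i| ≤ 1}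

lemma mem_smul_cubeE {n : ℕ} {t : ℝ} (ht : 0 < t) (z : Euc n) :
    z ∈ t • cubeE n ↔ ∀ i, |z i| ≤ t := by
  rw [Set.mem_smul_set_iff_inv_smul_mem₀ ht.ne']
  simp only [cubeE, mem_ofPred_eq, PiLp.smul_apply, smul_eq_mul, abs_mul, abs_inv, abs_of_pos ht]
  refine forall_congr' fun i => ?_
  rw [inv_mul_le_iff₀ ht, mul_one]

lemma preim_cubeE {n : ℕ} {t : ℝ} (ht : 0 < t) :
    (WithLp.toLp 2 : (Fin n → ℝ) → Euc n) ⁻¹' (t • cubeE n) = boxS Finset.univ t := by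
  ext z
  rw [mem_preimage, mem_smul_cubeE ht]
  simp [boxS]

lemma cubeE_compact (n : ℕ) : IsCompact (cubeE n) := by
  have h := preim_cubeE (n := n) one_pos
  rw [one_smul] at h
  have : cubeE n = (WithLp.toLp 2 : (Fin n → ℝ) → Euc n) '' boxS Finset.univ 1 := by
    rw [← h, image_preimage_eq _ (WithLp.toLp_surjective 2)]
  rw [this]
  exact (boxS_compact _ _).image (PiLp.continuous_toLp 2 _)

lemma crossE_sub (n : ℕ) : crossE n ⊆ cubeE n := by
  intro x hx i
  exact (Finset.single_le_sum (f := fun i => |x i|) (fun j _ => abs_nonneg _) (Finset.mem_univ i)).trans hx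

lemma crossE_cont (n : ℕ) : Continuous fun x : Euc n => ∑ i, |x i| := by
  fun_prop

lemma crossE_compact (n : ℕ) : IsCompact (crossE n) :=
  (cubeE_compact n).of_isClosed_subset (isClosed_le (crossE_cont n) continuous_const) (crossE_sub n)

lemma crossE_convex (n : ℕ) : Convex ℝ (crossE n) := by
  intro x hx y hy a b ha hb hab
  have hx : ∑ i, |x i| ≤ 1 := hx
  have hy : ∑ i, |y i| ≤ 1 := hy
  change ∑ i, |a * x i + b * y i| ≤ 1
  calc ∑ i, |a * x i + b * y i| ≤ ∑ i, (a * |x i| + b * |y i|) := by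
        refine Finset.sum_le_sum fun i _ => (abs_add_le _ _).trans ?_
        rw [abs_mul, abs_mul, abs_of_nonneg ha, abs_of_nonneg hb]
    _ = a * ∑ i, |x i| + b * ∑ i, |y i| := by
        rw [Finset.sum_add_distrib, Finset.mul_sum, Finset.mul_sum]
    _ ≤ 1 := by nlinarith

lemma crossE_int (n : ℕ) : (interior (crossE n)).Nonempty := by
  refine ⟨0, mem_interior.2 ⟨{x | ∑ i, |x i| < 1}, fun x (hx : ∑ i, |x i| < 1) => (hx.le : ∑ i, |x i| ≤ 1),
    isOpen_lt (crossE_cont n) continuous_const, ?_⟩⟩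
  simp

lemma crossE_centroid (n : ℕ) : (∫ x in crossE n, x) = (0 : Euc n) := by
  have h : ∫ x in crossE n, x = - ∫ x in crossE n, x := by
    rw [← integral_indicator (crossE_compact n).measurableSet]
    conv_lhs => rw [← integral_neg_eq_self]
    rw [← integral_neg]
    congr 1
    ext1 x
    have : -x ∈ crossE n ↔ x ∈ crossE n := by simp [crossE]
    by_cases hx : x ∈ crossE n
    · rw [indicator_of_mem hx, indicator_of_mem (this.2 hx)]
    · rw [indicator_of_notMem hx, indicator_of_notMem (mt this.1 hx), neg_zero]
  have h2 : (2 : ℝ) • ∫ x in crossE n, x = 0 := by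
    rw [two_smul]; nth_rewrite 2 [h]; exact add_neg_cancel _
  exact (smul_eq_zero.1 h2).resolve_left two_ne_zero

lemma polar_crossE (n : ℕ) : polarSet (crossE n) = cubeE n := by
  ext y
  constructor
  · intro h i
    rw [abs_le]
    have h1 := h (EuclideanSpace.single i 1) (by
      change ∑ j, |(EuclideanSpace.single i (1 : ℝ)) j| ≤ 1
      simp [Pi.single_apply, apply_ite abs])
    have h2 := h (EuclideanSpace.single i (-1)) (by
      change ∑ j, |(EuclideanSpace.single i (-1 : ℝ)) j| ≤ 1
      simp [Pi.single_apply, apply_ite abs])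
    rw [EuclideanSpace.inner_single_left] at h1 h2
    simp at h1 h2
    constructor <;> linarith
  · intro h x hx
    have hx : ∑ i, |x i| ≤ 1 := hx
    rw [PiLp.inner_apply]
    refine le_trans (Finset.sum_le_sum fun i _ => ?_) hx
    have := h i
    calc ⟪x i, y i⟫ ≤ |x i| * |y i| := by
          rw [← abs_mul]
          simp only [RCLike.inner_apply, conj_trivial]
          rw [mul_comm]; exact le_abs_self _
      _ ≤ |x i| := mul_le_of_le_one_right (abs_nonneg _) this

lemma cubeIneq {n : ℕ} {K : Set (Euc n)} (hK : IsCompact K) (hKc : Convex ℝ K)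
    {s t : ℝ} (hs : 0 < s) (hst : s ≤ t) :
    ENNReal.ofReal t * volume (K + s • cubeE n) + ENNReal.ofReal s * volume K ≤
      ENNReal.ofReal s * volume (K + t • cubeE n) + ENNReal.ofReal t * volume K := by
  have hvol : ∀ A : Set (Euc n), IsCompact A → 
      volume A = volume ((WithLp.toLp 2 : (Fin n → ℝ) → Euc n) ⁻¹' A) := fun A hA =>
    ((PiLp.volume_preserving_toLp (Fin n)).measure_preimage hA.measurableSet.nullMeasurableSet).symm
  have hadd : ∀ r : ℝ, 0 < r → (WithLp.toLp 2 : (Fin n → ℝ) → Euc n) ⁻¹' (K + r • cubeE n) = 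
      (WithLp.toLp 2 : (Fin n → ℝ) → Euc n) ⁻¹' K + boxS Finset.univ r := by
    intro r hr
    rw [← preim_cubeE hr]
    ext z
    constructor
    · rintro ⟨k, hk, w, hw, h⟩
      refine ⟨WithLp.ofLp k, hk, WithLp.ofLp w, hw, ?_⟩
      exact congrArg WithLp.ofLp h
    · rintro ⟨k, hk, w, hw, rfl⟩
      exact ⟨_, hk, _, hw, rfl⟩
  have hc : ∀ r : ℝ, IsCompact (K + r • cubeE n) := fun r => hK.add ((cubeE_compact n).smul r)
  rw [hvol _ (hc s), hvol _ (hc t), hvol _ hK, hadd s hs, hadd t (hs.trans_le hst)]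
  refine boxIneq ?_ ?_ hs.le hst _
  · have : (WithLp.toLp 2 : (Fin n → ℝ) → Euc n) ⁻¹' K = WithLp.ofLp '' K := by
      ext z
      exact ⟨fun h => ⟨_, h, rfl⟩, fun ⟨w, hw, h⟩ => by subst h; exact hw⟩
    rw [this]
    exact hK.image (PiLp.continuous_ofLp 2 _)
  · intro x hx y hy a b ha hb hab
    exact hKc hx hy ha hb hab

lemma MemLC.levelCompact {n : ℕ} {f : Euc n → ℝ} (hf : MemLC f) {c : ℝ} (hc : 0 < c) :
    IsCompact {x | c ≤ f x} := by
  have h := hf.tendsto_zero.eventually (gt_mem_nhds hc)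
  obtain ⟨K, hK, hsub⟩ := mem_cocompact.1 h
  refine hK.of_isClosed_subset (hf.usc.isClosed_preimage c) fun x hx => ?_
  by_contra hxK
  exact absurd (show f x < c from hsub hxK) (not_lt.2 hx)

lemma MemLC.levelConvex {n : ℕ} {f : Euc n → ℝ} (hf : MemLC f) {c : ℝ} (hc : 0 < c) :
    Convex ℝ {x | c ≤ f x} := by
  intro x hx y hy a b ha hb hab
  have hx : c ≤ f x := hx
  have hy : c ≤ f y := hy
  refine le_trans ?_ (hf.logConcave x y a b ha hb hab)
  calc c = c ^ a * c ^ b := by rw [← Real.rpow_add hc, hab, Real.rpow_one]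
    _ ≤ _ := by
      have := hf.nonneg x
      gcongr

lemma level_indSup {n : ℕ} {f : Euc n → ℝ} (hf : MemLC f) {C : Set (Euc n)} (hC : IsCompact C)
    (hCn : C.Nonempty) (t : ℝ) {c : ℝ} (hc : 0 < c) :
    {x | c ≤ indSup f C t x} = {x | c ≤ f x} + t • C := by
  ext x
  constructor
  · intro hx
    have husc : UpperSemicontinuous fun z => f (x - z) :=
      UpperSemicontinuous.comp hf.usc (continuous_const.sub continuous_id)
    obtain ⟨z, hz, hmax⟩ := UpperSemicontinuousOn.exists_isMaxOn (hCn.smul_set (a := t)) (hC.smul t)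
      (husc.upperSemicontinuousOn (t • C))
    refine ⟨x - z, ?_, z, hz, by simp⟩
    exact le_trans hx (indSup_le (hf.nonneg _) fun w hw => hmax hw)
  · rintro ⟨k, hk, z, hz, rfl⟩
    have := le_indSup hf (x := k + z) hz
    rw [add_sub_cancel_right] at this
    exact le_trans hk this

lemma indSup_measurable {n : ℕ} {f : Euc n → ℝ} (hf : MemLC f) {C : Set (Euc n)} (hC : IsCompact C)
    (hCn : C.Nonempty) (t : ℝ) : Measurable (indSup f C t) := by
  refine measurable_of_Ici fun c => ?_
  rcases le_or_gt c 0 with hc | hc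
  · have : indSup f C t ⁻¹' Ici c = univ := by
      ext x; simpa using hc.trans (indSup_nonneg hf C t x)
    rw [this]; exact MeasurableSet.univ
  · have := level_indSup hf hC hCn t hc
    change MeasurableSet {x | c ≤ indSup f C t x}
    rw [this]
    exact ((hf.levelCompact hc).add (hC.smul t)).measurableSet

lemma MemLC.decay {n : ℕ} {f : Euc n → ℝ} (hf : MemLC f) (k : ℕ) :
    ∃ A, 0 < A ∧ ∀ x, f x * (1 + ‖x‖) ^ k ≤ A := by
  obtain ⟨M, hM0, hM⟩ := hf.bdd
  obtain ⟨x₀, hm⟩ := hf.nonzero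
  obtain ⟨R, hR0, hR⟩ : ∃ R : ℝ, 0 < R ∧ ∀ x, R ≤ ‖x - x₀‖ → f x ≤ f x₀ * Real.exp (-1) := by
    have h := hf.tendsto_zero.eventually (gt_mem_nhds (show 0 < f x₀ * Real.exp (-1) by positivity))
    obtain ⟨K, hK, hsub⟩ := mem_cocompact.1 h
    obtain ⟨R, hR⟩ := hK.isBounded.subset_ball x₀
    refine ⟨max R 1, by positivity, fun x hx => ?_⟩
    have : x ∉ K := fun hxK => by
      have := hR hxK
      rw [mem_ball, dist_eq_norm] at this
      exact absurd ((le_max_left _ _).trans hx) (not_le.2 this)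
    exact (hsub this : f x < _).le
  have hexp : ∀ x, f x ≤ M * Real.exp 1 * Real.exp (-(‖x - x₀‖ / R)) := by
    intro x
    rw [mul_assoc, ← Real.exp_add]
    rcases lt_or_ge ‖x - x₀‖ R with hd | hd
    · refine (hM x).trans (le_mul_of_one_le_right hM0.le ?_)
      rw [Real.one_le_exp_iff]
      have : ‖x - x₀‖ / R ≤ 1 := (div_le_one hR0).2 hd.le
      linarith
    · rcases (hf.nonneg x).eq_or_lt with h0 | h0
      · rw [← h0]; positivity
      have hdpos : 0 < ‖x - x₀‖ := hR0.trans_le hd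
      set d := ‖x - x₀‖ with hdd
      have hb1 : R / d ≤ 1 := (div_le_one hdpos).2 hd
      have hlc := hf.logConcave x₀ x (1 - R / d) (R / d) (by linarith) (by positivity) (by ring)
      have hy := hR ((1 - R / d) • x₀ + (R / d) • x) (by
        have : (1 - R / d) • x₀ + (R / d) • x - x₀ = (R / d) • (x - x₀) := by
          rw [sub_smul, smul_sub, one_smul]; abel
        rw [this, norm_smul, Real.norm_of_nonneg (by positivity), ← hdd, div_mul_cancel₀ _ hdpos.ne'])
      have h3 := Real.log_le_log (by positivity) (hlc.trans hy)
      rw [Real.log_mul (by positivity) (by positivity), Real.log_mul (by positivity) (by positivity),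
        Real.log_rpow hm, Real.log_rpow h0, Real.log_exp] at h3
      have h4 : Real.log (f x) ≤ Real.log (f x₀) - d / R := by
        have : R / d * (Real.log (f x) - Real.log (f x₀)) ≤ -1 := by linarith
        rw [div_mul_eq_mul_div, div_le_iff₀ hdpos] at this
        have h5 : Real.log (f x) - Real.log (f x₀) ≤ -(d / R) := by
          rw [← neg_div, le_div_iff₀ hR0]; linarith
        linarith
      calc f x = Real.exp (Real.log (f x)) := (Real.exp_log h0).symm
        _ ≤ Real.exp (Real.log (f x₀) - d / R) := Real.exp_le_exp.2 h4
        _ = f x₀ * Real.exp (-(d / R)) := by rw [sub_eq_add_neg, Real.exp_add, Real.exp_log hm]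
        _ ≤ M * Real.exp (1 + -(d / R)) := by
          have := hM x₀
          gcongr
          linarith
  refine ⟨M * Real.exp 1 * ((1 + ‖x₀‖) ^ k * (R ^ k * k.factorial * Real.exp (1 / R))), by positivity, 
    fun x => ?_⟩
  set d := ‖x - x₀‖ with hdd
  have hd0 : 0 ≤ d := norm_nonneg _
  have h1 : 1 + ‖x‖ ≤ (1 + ‖x₀‖) * (1 + d) := by
    have : ‖x‖ ≤ d + ‖x₀‖ := by
      simpa using norm_add_le (x - x₀) x₀
    nlinarith [norm_nonneg x₀]
  have h2 : (1 + d) ^ k ≤ R ^ k * k.factorial * Real.exp ((1 + d) / R) := by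
    have := Real.pow_div_factorial_le_exp ((1 + d) / R) (by positivity) k
    rw [div_pow, div_div, div_le_iff₀ (by positivity)] at this
    linarith
  calc f x * (1 + ‖x‖) ^ k ≤ (M * Real.exp 1 * Real.exp (-(d / R))) * ((1 + ‖x₀‖) * (1 + d)) ^ k := by
        have := hexp x
        gcongr
    _ = (M * Real.exp 1 * Real.exp (-(d / R))) * ((1 + ‖x₀‖) ^ k * (1 + d) ^ k) := by rw [mul_pow]
    _ ≤ (M * Real.exp 1 * Real.exp (-(d / R))) * ((1 + ‖x₀‖) ^ k * (R ^ k * k.factorial * Real.exp ((1 + d) / R))) := by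
        gcongr
    _ = _ := by
        have : Real.exp ((1 + d) / R) = Real.exp (1 / R) * Real.exp (d / R) := by
          rw [← Real.exp_add]; congr 1; ring
        rw [this, Real.exp_neg]
        field_simp

lemma indSup_finite {n : ℕ} {f : Euc n → ℝ} (hf : MemLC f) {C : Set (Euc n)} (hC : IsCompact C)
    (t : ℝ) : ∫⁻ x, ENNReal.ofReal (indSup f C t x) ≠ ∞ := by
  obtain ⟨A, hA0, hA⟩ := hf.decay (n + 1)
  obtain ⟨ρ, hρ0, hρ⟩ := (hC.smul t).isBounded.exists_pos_norm_le
  have hfin : (∫⁻ x : Euc n, ENNReal.ofReal ((1 + ‖x‖) ^ (-((n + 1 : ℕ) : ℝ)))) < ∞ := by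
    apply finite_integral_one_add_norm
    rw [finrank_euclideanSpace_fin]
    push_cast; linarith
  have hb : ∀ x, indSup f C t x ≤ (A * (1 + ρ) ^ (n + 1)) * (1 + ‖x‖) ^ (-((n + 1 : ℕ) : ℝ)) := by
    intro x
    refine indSup_le (by positivity) fun z hz => ?_
    have h1 := hA (x - z)
    have h2 := hρ z hz
    have h3 : 1 + ‖x‖ ≤ (1 + ρ) * (1 + ‖x - z‖) := by
      have : ‖x‖ ≤ ‖x - z‖ + ‖z‖ := by simpa using norm_add_le (x - z) z
      nlinarith [norm_nonneg (x - z)]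
    rw [Real.rpow_neg (by positivity), Real.rpow_natCast, ← div_eq_mul_inv, le_div_iff₀ (by positivity)]
    calc f (x - z) * (1 + ‖x‖) ^ (n + 1) ≤ f (x - z) * ((1 + ρ) * (1 + ‖x - z‖)) ^ (n + 1) := by
          have := hf.nonneg (x - z)
          gcongr
      _ = (f (x - z) * (1 + ‖x - z‖) ^ (n + 1)) * (1 + ρ) ^ (n + 1) := by rw [mul_pow]; ring
      _ ≤ _ := by gcongr
  refine ne_of_lt (lt_of_le_of_lt (lintegral_mono fun x => ENNReal.ofReal_le_ofReal (hb x)) ?_)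
  simp_rw [ENNReal.ofReal_mul (show (0:ℝ) ≤ A * (1 + ρ) ^ (n + 1) by positivity)]
  rw [lintegral_const_mul' _ _ ENNReal.ofReal_ne_top]
  exact ENNReal.mul_lt_top ENNReal.ofReal_lt_top hfin

lemma exists_var {n : ℕ} {f : Euc n → ℝ} (hf : MemLC f) : ∃ a, HasVarInd f (cubeE n) a := by
  have hC := cubeE_compact n
  have hC0 : (0 : Euc n) ∈ cubeE n := fun i => by simp
  have hCn : (cubeE n).Nonempty := ⟨0, hC0⟩
  set L : ℝ → ℝ≥0∞ := fun t => ∫⁻ x, ENNReal.ofReal (indSup f (cubeE n) t x) with hL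
  set L0 : ℝ≥0∞ := ∫⁻ x, ENNReal.ofReal (f x) with hL0
  have hle : ∀ t x, f x ≤ indSup f (cubeE n) t x := by
    intro t x
    have : (0 : Euc n) ∈ t • cubeE n := ⟨0, hC0, smul_zero t⟩
    simpa using le_indSup hf (x := x) this
  have hLfin : ∀ t, L t ≠ ∞ := fun t => indSup_finite hf hC t
  have hL0le : ∀ t, L0 ≤ L t := fun t => lintegral_mono fun x => ENNReal.ofReal_le_ofReal (hle t x)
  have hL0fin : L0 ≠ ∞ := ne_top_of_le_ne_top (hLfin 1) (hL0le 1)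
  have hI : ∀ t, ∫ x, indSup f (cubeE n) t x = (L t).toReal := fun t =>
    integral_eq_lintegral_of_nonneg_ae (ae_of_all _ (indSup_nonneg hf _ t))
      (indSup_measurable hf hC hCn t).aestronglyMeasurable
  have hI0 : ∫ x, f x = L0.toReal :=
    integral_eq_lintegral_of_nonneg_ae (ae_of_all _ hf.nonneg) hf.usc.measurable.aestronglyMeasurable
  have hLc : ∀ t, L t = ∫⁻ c in Ioi (0 : ℝ), volume ({x | c ≤ f x} + t • cubeE n) := by
    intro t
    rw [hL]
    beta_reduce
    rw [lintegral_eq_lintegral_meas_le volume (ae_of_all _ (indSup_nonneg hf _ t))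
      (indSup_measurable hf hC hCn t).aemeasurable]
    exact setLIntegral_congr_fun measurableSet_Ioi fun c hc => by
      beta_reduce
      rw [level_indSup hf hC hCn t hc]
  have hL0c : L0 = ∫⁻ c in Ioi (0 : ℝ), volume {x | c ≤ f x} :=
    lintegral_eq_lintegral_meas_le volume (ae_of_all _ hf.nonneg) hf.usc.measurable.aemeasurable
  have hm0 : Measurable fun c : ℝ => volume {x | c ≤ f x} := 
    Antitone.measurable fun c d hcd => measure_mono fun x hx => le_trans hcd hx
  have hmt : ∀ t : ℝ, Measurable fun c : ℝ => volume ({x | c ≤ f x} + t • cubeE n) := fun t =>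
    Antitone.measurable fun c d hcd => measure_mono 
      (Set.add_subset_add_right fun x hx => le_trans hcd hx)
  have main : ∀ s t : ℝ, 0 < s → s ≤ t → ENNReal.ofReal t * L s + ENNReal.ofReal s * L0 ≤
      ENNReal.ofReal s * L t + ENNReal.ofReal t * L0 := by
    intro s t hs hst
    rw [hLc, hLc, hL0c, ← lintegral_const_mul _ (hmt s), ← lintegral_const_mul _ (hmt t), 
      ← lintegral_const_mul _ hm0, ← lintegral_const_mul _ hm0,
      ← lintegral_add_left ((hmt s).const_mul _), ← lintegral_add_left ((hmt t).const_mul _)]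
    exact setLIntegral_mono' measurableSet_Ioi fun c hc => 
      cubeIneq (hf.levelCompact hc) (hf.levelConvex hc) hs hst
  have mainR : ∀ s t : ℝ, 0 < s → s ≤ t → t * (L s).toReal + s * L0.toReal ≤
      s * (L t).toReal + t * L0.toReal := by
    intro s t hs hst
    have ht := hs.trans_le hst
    have h := main s t hs hst
    have h2 := ENNReal.toReal_mono (by 
      exact ENNReal.add_ne_top.2 ⟨ENNReal.mul_ne_top ENNReal.ofReal_ne_top (hLfin t), 
        ENNReal.mul_ne_top ENNReal.ofReal_ne_top hL0fin⟩) h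
    rw [ENNReal.toReal_add (ENNReal.mul_ne_top ENNReal.ofReal_ne_top (hLfin s)) 
        (ENNReal.mul_ne_top ENNReal.ofReal_ne_top hL0fin),
      ENNReal.toReal_add (ENNReal.mul_ne_top ENNReal.ofReal_ne_top (hLfin t)) 
        (ENNReal.mul_ne_top ENNReal.ofReal_ne_top hL0fin)] at h2
    simpa [ENNReal.toReal_mul, ENNReal.toReal_ofReal, hs.le, ht.le] using h2
  refine ⟨_, MonotoneOn.tendsto_nhdsGT ?_ ?_⟩
  · intro s hs t ht hst
    have hs : 0 < s := hs
    have ht : 0 < t := ht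
    beta_reduce
    rw [hI, hI, hI0, div_le_div_iff₀ hs ht]
    linarith [mainR s t hs hst]
  · refine ⟨0, ?_⟩
    rintro _ ⟨t, ht, rfl⟩
    beta_reduce
    rw [hI, hI0]
    exact div_nonneg (sub_nonneg.2 (ENNReal.toReal_mono (hLfin t) (hL0le t))) (le_of_lt ht)

lemma gsa_nonempty {n : ℕ} {f : Euc n → ℝ} (hf : MemLC f) : (gsaSet n f).Nonempty := by
  obtain ⟨a, ha⟩ := exists_var hf
  refine ⟨_, crossE n, a, crossE_compact n, crossE_convex n, crossE_int n, crossE_centroid n, ?_, rfl⟩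
  rw [polar_crossE]
  exact ha

theorem stmt11 {n : ℕ} (hn : 1 ≤ n) (f : Euc n → ℝ) (hf : MemLC f) :
    affSA n f ^ (n + 1)
      ≤ (n : ℝ) * (volume (closedBall (0 : Euc n) 1)).toReal * geomSA n f ^ n := by
  exact final_algebra hn f hf (gsa_nonempty hf)

end
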